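/- (Chiò pivotal condensation, off-diagonal pivot.) Let R be a commutative ring, n ≥ 2, and A an n×n matrix over R (indices 0,…,n−1). Define the (n−1)×(n−1) matrix B indexed by rows i ∈ {1,…,n−1} and columns j ∈ {0,2,3,…,n−1} by B_{ij} = A_{01} A_{ij} − A_{i1} A_{0j}. Then det B = − A_{01}^{n−2} · det A. -/

import Mathlib

theorem chio_aux {R : Type*} [CommRing R] {m : ℕ}
    (A : Matrix (Fin (m + 2)) (Fin (m + 2)) R)
    (B : Matrix (Fin (m + 1)) (Fin (m + 1)) R)
    (hB : ∀ i j : Fin (m + 1),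
      B i j = A 0 1 * A i.succ ((1 : Fin (m + 2)).succAbove j)
            - A i.succ 1 * A 0 ((1 : Fin (m + 2)).succAbove j)) :
    A 0 1 * B.det = A 0 1 * (- (A 0 1 ^ m * A.det)) := by
  let v : Fin (m + 2) → R := Fin.cons 1 (fun _ => A 0 1)
  let c : Fin (m + 2) → R := Fin.cons 0 (fun i => - A i.succ 1)
  let D : Matrix (Fin (m + 2)) (Fin (m + 2)) R := Matrix.of fun i j => v i * A i j
  let C : Matrix (Fin (m + 2)) (Fin (m + 2)) R := Matrix.of fun i j => D i j + c i * D 0 j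
  have h1 : C.det = D.det :=
    Matrix.det_eq_of_forall_row_eq_smul_add_const c 0 (by simp [c]) (fun i j => rfl)
  have h2 : D.det = A 0 1 ^ (m + 1) * A.det := by
    have := Matrix.det_mul_column v A
    rw [Fin.prod_univ_succ] at this
    simpa [D, v] using this
  have h3 : C.det = - (A 0 1 * B.det) := by
    rw [Matrix.det_succ_column C 1, Fin.sum_univ_succ, Finset.sum_eq_zero]
    · have : C.submatrix (Fin.succAbove 0) (Fin.succAbove 1) = B := by
        ext i j
        simp [C, D, v, c, hB]
        ring
      rw [this]
      simp [C, D, v, c]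
    · intro i _
      have : C i.succ 1 = 0 := by
        simp [C, D, v, c]
        ring
      rw [this]
      simp
  rw [h2, h3] at h1
  linear_combination -h1

/-- Chiò pivotal condensation, off-diagonal pivot: for an `n × n` matrix `A`
over a commutative ring with `n = m + 2 ≥ 2`, the `(n-1) × (n-1)` matrix
`B i j = A 0 1 * A i j - A i 1 * A 0 j`, formed over the rows other than row `0`
(via `Fin.succ`) and the columns other than column `1` (via `Fin.succAbove 1`),
satisfies `det B = - A 0 1 ^ (n - 2) * det A`. -/
theorem chio_condensation_offdiagonal_pivot {R : Type*} [CommRing R] {m : ℕ}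
    (A : Matrix (Fin (m + 2)) (Fin (m + 2)) R)
    (B : Matrix (Fin (m + 1)) (Fin (m + 1)) R)
    (hB : ∀ i j : Fin (m + 1),
      B i j = A 0 1 * A i.succ ((1 : Fin (m + 2)).succAbove j)
            - A i.succ 1 * A 0 ((1 : Fin (m + 2)).succAbove j)) :
    B.det = - (A 0 1 ^ m * A.det) := by
  let X := Matrix.mvPolynomialX (Fin (m + 2)) (Fin (m + 2)) ℤ
  let f : MvPolynomial (Fin (m + 2) × Fin (m + 2)) ℤ →+* R :=
    MvPolynomial.eval₂Hom (Int.castRingHom R) (fun p => A p.1 p.2)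
  let Y : Matrix (Fin (m + 1)) (Fin (m + 1)) (MvPolynomial (Fin (m + 2) × Fin (m + 2)) ℤ) :=
    Matrix.of fun i j => X 0 1 * X i.succ ((1 : Fin (m + 2)).succAbove j)
            - X i.succ 1 * X 0 ((1 : Fin (m + 2)).succAbove j)
  have hX0 : X 0 1 ≠ 0 := by
    simp [X, Matrix.mvPolynomialX]
  have key := mul_left_cancel₀ hX0 (chio_aux X Y (fun i j => rfl))
  have hf : ∀ i j, f (X i j) = A i j := by
    intro i j
    simp [f, X, Matrix.mvPolynomialX]
  have hA : f.mapMatrix X = A := by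
    ext i j
    exact hf i j
  have hY : f.mapMatrix Y = B := by
    ext i j
    simp [Y, hB, hf]
  have := congrArg f key
  rwa [map_neg, map_mul, map_pow, RingHom.map_det, RingHom.map_det, hA, hY, hf] at this
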